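/- arXiv:1703.03356 — 2 statements merged into one kernel-verified Lean document; each statement's English description precedes it below -/
import Mathlib

section
/- Let R be a commutative ring and let m be a positive integer that is invertible in R. If d and e are distinct positive divisors of m, then the images in R[X] of the cyclotomic polynomials Φ_d and Φ_e generate the unit ideal of R[X]; that is, there exist polynomials a, b ∈ R[X] with a·Φ_d + b·Φ_e = 1. -/
/-- If `m` is a positive integer invertible in the commutative ring `R`, and `d ≠ e` are
positive divisors of `m`, then the cyclotomic polynomials `Φ_d` and `Φ_e` generate the
unit ideal of `R[X]`. -/
theorem cyclotomic_isCoprime_of_distinct_divisors {R : Type*} [CommRing R]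
    (m : ℕ) (hm : 0 < m) (hu : IsUnit (m : R))
    (d e : ℕ) (hd0 : 0 < d) (he0 : 0 < e) (hd : d ∣ m) (he : e ∣ m) (hde : d ≠ e) :
    ∃ a b : Polynomial R,
      a * Polynomial.cyclotomic d R + b * Polynomial.cyclotomic e R = 1 := by
  have hsep : (Polynomial.X ^ m - 1 : Polynomial R).Separable := by
    have h := Polynomial.separable_X_pow_sub_C_unit (1 : Rˣ) hu
    simpa using h
  rw [← Polynomial.prod_cyclotomic_eq_X_pow_sub_one hm R] at hsep
  have hdm : d ∈ m.divisors := Nat.mem_divisors.mpr ⟨hd, hm.ne'⟩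
  have hem : e ∈ m.divisors.erase d :=
    Finset.mem_erase.mpr ⟨hde.symm, Nat.mem_divisors.mpr ⟨he, hm.ne'⟩⟩
  rw [← Finset.mul_prod_erase _ _ hdm] at hsep
  exact hsep.isCoprime.of_isCoprime_of_dvd_right (Finset.dvd_prod_of_mem _ hem)
end

section
/- Let R be a commutative ring and let m be a positive integer that is invertible in R. Then there is an isomorphism of R-algebras R[X]/(X^m − 1) ≅ ∏_{d ∣ m} R[X]/(Φ_d(X)), where the product is over all positive divisors d of m and the isomorphism is induced by the canonical quotient maps R[X]/(X^m − 1) → R[X]/(Φ_d(X)). -/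
open Polynomial

/-- If `m` is a positive integer invertible in the commutative ring `R`, then
`R[X]/(X^m - 1)` is isomorphic as an `R`-algebra to the product over the positive divisors
`d` of `m` of the rings `R[X]/(Φ_d)`, the isomorphism being induced by the canonical
quotient maps. -/
theorem quotient_pow_sub_one_equiv_pi_cyclotomic {R : Type*} [CommRing R]
    (m : ℕ) (hm : 0 < m) (hu : IsUnit (m : R)) :
    ∃ e : (R[X] ⧸ Ideal.span {(X : R[X]) ^ m - 1}) ≃ₐ[R]
        (∀ d : m.divisors, R[X] ⧸ Ideal.span {cyclotomic (d : ℕ) R}),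
      ∀ p : R[X],
        e (Ideal.Quotient.mk (Ideal.span {(X : R[X]) ^ m - 1}) p) =
          fun d : m.divisors =>
            Ideal.Quotient.mk (Ideal.span {cyclotomic (d : ℕ) R}) p := by
  have hprod : ∏ d : m.divisors, cyclotomic (d : ℕ) R = (X : R[X]) ^ m - 1 := by
    rw [← prod_cyclotomic_eq_X_pow_sub_one hm R]
    exact Finset.prod_coe_sort m.divisors (fun d => cyclotomic d R)
  have hsep : ((X : R[X]) ^ m - 1).Separable := by
    simpa using separable_X_pow_sub_C_unit (1 : Rˣ) hu
  have hcop : Pairwise fun i j : m.divisors =>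
      IsCoprime (cyclotomic (i : ℕ) R) (cyclotomic (j : ℕ) R) := by
    intro i j hij
    apply Separable.isCoprime
    rw [← hprod, ← Finset.mul_prod_erase Finset.univ _ (Finset.mem_univ i),
      ← Finset.mul_prod_erase (Finset.univ.erase i) _
        (Finset.mem_erase.2 ⟨hij.symm, Finset.mem_univ j⟩), ← mul_assoc] at hsep
    exact hsep.of_mul_left
  have hI : Ideal.span {(X : R[X]) ^ m - 1} =
      ⨅ d : m.divisors, Ideal.span {cyclotomic (d : ℕ) R} := by
    rw [Ideal.iInf_span_singleton hcop, hprod]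
  have hc : Pairwise (Function.onFun IsCoprime
      fun d : m.divisors => Ideal.span {cyclotomic (d : ℕ) R}) := by
    intro i j hij
    exact (Ideal.isCoprime_span_singleton_iff _ _).2 (hcop hij)
  let e := (Ideal.quotEquivOfEq hI).trans (Ideal.quotientInfRingEquivPiQuotient _ hc)
  have he : ∀ p : R[X], e (Ideal.Quotient.mk _ p) = fun d : m.divisors =>
      Ideal.Quotient.mk (Ideal.span {cyclotomic (d : ℕ) R}) p := fun p => rfl
  exact ⟨AlgEquiv.ofRingEquiv (f := e) (fun r => he (C r)), he⟩
end
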